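/- Let X be a centered Gaussian process on [A,B] with almost surely twice continuously differentiable sample paths and twice continuously differentiable covariance. Assume the variance σ²(t) attains its maximum S at a unique point t₀ ∈ [A,B], that t₀ = A or t₀ = B, and that (σ²)′(t₀) ≠ 0. Then there exist χ > 0, C > 0 and u₀ > 0 such that for all u ≥ u₀, |ℙ(max_{t∈[A,B]} |X(t)| ≥ u) − 2 ℙ(X(t₀) ≥ u)| ≤ C e^{−u²(1+χ)/(2S)}. -/

import Mathlib

open MeasureTheory ProbabilityTheory Set
open scoped NNReal ENNReal

lemma gauss_tail {Ω : Type*} [MeasurableSpace Ω] (P : Measure Ω) [IsProbabilityMeasure P]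
    (G : Ω → ℝ) (v : ℝ≥0) (hG : P.map G = gaussianReal 0 v)
    (w x : ℝ) (hvw : (v:ℝ) ≤ w) (hx : 0 ≤ x) :
    P {ω | x ≤ G ω} ≤ ENNReal.ofReal (Real.exp (-x ^ 2 / (2 * w))) := by
  have hw : 0 ≤ w := v.2.trans hvw
  have hGm : AEMeasurable G P := aemeasurable_of_map_neZero (by rw [hG]; infer_instance)
  have h : HasSubgaussianMGF G w.toNNReal P := by
    constructor
    · intro t
      have := integrable_exp_mul_gaussianReal (μ := 0) (v := v) t
      rw [← hG] at this
      exact this.comp_aemeasurable hGm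
    · intro t
      rw [mgf_gaussianReal hG]
      apply Real.exp_le_exp.2
      have : (v:ℝ) * t^2 ≤ w * t^2 := by gcongr
      rw [Real.coe_toNNReal w hw]
      linarith
  have := h.measure_ge_le hx
  rw [Real.coe_toNNReal w hw] at this
  rw [← ofReal_measureReal (by finiteness)]
  exact ENNReal.ofReal_le_ofReal this

lemma gauss_sq {Ω : Type*} [MeasurableSpace Ω] (P : Measure Ω) [IsProbabilityMeasure P]
    (G : Ω → ℝ) (v : ℝ≥0) (hG : P.map G = gaussianReal 0 v) :
    MemLp G 2 P ∧ ∫ ω, G ω ^ 2 ∂P = v := by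
  have hGm : AEMeasurable G P := aemeasurable_of_map_neZero (by rw [hG]; infer_instance)
  constructor
  · have := memLp_id_gaussianReal' (μ := 0) (v := v) 2 (by simp)
    rw [← hG] at this
    exact this.comp_of_map hGm
  · have h2 := variance_id_gaussianReal (μ := 0) (v := v)
    rw [variance_eq_integral (by fun_prop)] at h2
    simp only [id, integral_id_gaussianReal, sub_zero] at h2
    rw [← h2, ← hG, integral_map hGm (by fun_prop)]

lemma fern_half : (2:ℝ≥0∞)⁻¹ < 3/4 := by
  rw [← ENNReal.toReal_lt_toReal (by simp) (by finiteness)]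
  simp
  norm_num

lemma fern_one : (3/4 : ℝ≥0∞) < 1 := by
  rw [← ENNReal.toReal_lt_toReal (by finiteness) (by simp)]
  simp
  norm_num

lemma fern_log_pos : 0 < Fernique.logRatio (3/4) := Fernique.logRatio_pos fern_half fern_one

lemma fern_const : ∃ C : ℝ, 0 < C ∧ ENNReal.ofReal (Real.exp (Fernique.logRatio (3/4)))
        + ∑' n : ℕ, ENNReal.ofReal (Real.exp (-2⁻¹ * Real.log ((3/4 : ℝ≥0∞) / (1 - 3/4)).toReal * 2 ^ n))
        ≤ ENNReal.ofReal C := by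
  have hfin : ENNReal.ofReal (Real.exp (Fernique.logRatio (3/4)))
        + ∑' n : ℕ, ENNReal.ofReal (Real.exp (-2⁻¹ * Real.log ((3/4 : ℝ≥0∞) / (1 - 3/4)).toReal * 2 ^ n)) < ⊤ := by
    refine ENNReal.add_lt_top.mpr ⟨ENNReal.ofReal_lt_top, ?_⟩
    refine Summable.tsum_ofReal_lt_top <|
      Real.summable_exp_nat_mul_of_ge ?_ (fun i ↦ mod_cast (Nat.lt_pow_self (by simp)).le)
    refine mul_neg_of_neg_of_pos (by simp) (Real.log_pos ?_)
    rw [ENNReal.toReal_div, ENNReal.toReal_sub_of_le fern_one.le (by simp)]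
    simp
    norm_num
  refine ⟨(ENNReal.ofReal (Real.exp (Fernique.logRatio (3/4)))
        + ∑' n : ℕ, ENNReal.ofReal (Real.exp (-2⁻¹ * Real.log ((3/4 : ℝ≥0∞) / (1 - 3/4)).toReal * 2 ^ n))).toReal, ?_, ?_⟩
  · refine ENNReal.toReal_pos ?_ hfin.ne
    have : 0 < ENNReal.ofReal (Real.exp (Fernique.logRatio (3/4))) := by
      simp [Real.exp_pos]
    exact (lt_of_lt_of_le this le_self_add).ne'
  · rw [ENNReal.ofReal_toReal hfin.ne]

lemma fern_fin {Ω : Type*} [MeasurableSpace Ω] (P : Measure Ω) [IsProbabilityMeasure P]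
    (W : Submodule ℝ (Ω → ℝ))
    (hW : ∀ G ∈ W, Measurable G ∧ ∃ v : ℝ≥0, P.map G = gaussianReal 0 v)
    (C : ℝ) (hC : ENNReal.ofReal (Real.exp (Fernique.logRatio (3/4)))
        + ∑' n : ℕ, ENNReal.ofReal (Real.exp (-2⁻¹ * Real.log ((3/4 : ℝ≥0∞) / (1 - 3/4)).toReal * 2 ^ n))
        ≤ ENNReal.ofReal C)
    (V : ℕ → Ω → ℝ) (hV : ∀ n, V n ∈ W) (a : ℝ)
    (ha : 3/4 ≤ P {ω | ∀ n, |V n ω| ≤ a}) (N : ℕ) :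
    ∫⁻ ω, ENNReal.ofReal (Real.exp (Fernique.logRatio (3/4) * a⁻¹ ^ 2 * ‖fun i : Fin N => V i ω‖ ^ 2)) ∂P
      ≤ ENNReal.ofReal C := by
  have hm : Measurable (fun ω => fun i : Fin N => V i ω) :=
    measurable_pi_lambda _ fun i => (hW _ (hV i)).1
  set μ := P.map (fun ω => fun i : Fin N => V i ω) with hμ
  have hL : ∀ L : StrongDual ℝ (Fin N → ℝ), ∃ v : ℝ≥0, μ.map L = gaussianReal 0 v := by
    intro L
    have : (L ∘ fun ω => fun i : Fin N => V i ω) ∈ W := by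
      have h1 : (L ∘ fun ω => fun i : Fin N => V i ω)
          = ∑ i : Fin N, L (Pi.single i 1) • V i := by
        ext ω
        simp only [Function.comp, Finset.sum_apply, Pi.smul_apply, smul_eq_mul]
        have := L.toLinearMap.pi_apply_eq_sum_univ (fun i : Fin N => V i ω)
        simp only [ContinuousLinearMap.coe_coe, smul_eq_mul] at this
        rw [this]
        refine Finset.sum_congr rfl fun i _ => ?_
        rw [mul_comm]
        congr 2
        ext j
        simp [Pi.single_apply, eq_comm]
      rw [h1]
      exact W.sum_mem fun i _ => W.smul_mem _ (hV i)
    obtain ⟨v, hv⟩ := (hW _ this).2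
    refine ⟨v, ?_⟩
    rw [hμ, Measure.map_map (by fun_prop) hm, hv]
  have hg : IsGaussian μ := isGaussian_of_map_eq_gaussianReal fun L => ⟨0, hL L⟩
  have h0 : ∀ L : StrongDual ℝ (Fin N → ℝ), μ[L] = 0 := by
    intro L
    obtain ⟨v, hv⟩ := hL L
    have : ∫ x, x ∂(μ.map L) = 0 := by rw [hv]; simp
    rwa [integral_map (by fun_prop) (by fun_prop)] at this
  have hrot := IsGaussian.map_rotation_eq_self_of_forall_strongDual_eq_zero h0 (-(Real.pi/4))
  have hball : 3/4 ≤ μ {x | ‖x‖ ≤ a} := by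
    rw [hμ, Measure.map_apply hm (measurableSet_le (by fun_prop) (by fun_prop))]
    refine ha.trans ?_
    have ha0 : {ω | ∀ n, |V n ω| ≤ a} ⊆ {ω | 0 ≤ a} := fun ω h => (abs_nonneg _).trans (h 0)
    refine measure_mono fun ω h => ?_
    exact (pi_norm_le_iff_of_nonneg (ha0 h)).2 fun i => h i
  have := lintegral_exp_mul_sq_norm_le_of_map_rotation_eq_self hrot hball fern_half
  refine le_trans ?_ (this.trans hC)
  rw [hμ, lintegral_map (by fun_prop) hm]

lemma exists_level {Ω : Type*} [MeasurableSpace Ω] (P : Measure Ω) [IsProbabilityMeasure P]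
    (V : ℕ → Ω → ℝ) (hb : ∀ᵐ ω ∂P, ∃ K, ∀ n, |V n ω| ≤ K) :
    ∃ a : ℝ, 0 < a ∧ 3/4 ≤ P {ω | ∀ n, |V n ω| ≤ a} := by
  have hmono : Monotone (fun k : ℕ => {ω | ∀ n, |V n ω| ≤ (k:ℝ)}) := by
    intro k l hkl ω h n
    exact (h n).trans (by exact_mod_cast hkl)
  have h1 : P (⋃ k : ℕ, {ω | ∀ n, |V n ω| ≤ (k:ℝ)}) = 1 := by
    apply le_antisymm prob_le_one
    have : P univ ≤ P (⋃ k : ℕ, {ω | ∀ n, |V n ω| ≤ (k:ℝ)}) := by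
      apply measure_mono_ae
      filter_upwards [hb] with ω ⟨K, hK⟩ _
      obtain ⟨k, hk⟩ := exists_nat_ge K
      exact mem_iUnion.2 ⟨k, fun n => (hK n).trans hk⟩
    simpa using this
  have := tendsto_measure_iUnion_atTop (μ := P) hmono
  rw [h1] at this
  have h2 := this.eventually (lt_mem_nhds fern_one)
  obtain ⟨k, hk1, hk2⟩ := (h2.and (Filter.eventually_gt_atTop 0)).exists
  exact ⟨k, by exact_mod_cast hk2, hk1.le⟩

lemma fern_seq {Ω : Type*} [MeasurableSpace Ω] (P : Measure Ω) [IsProbabilityMeasure P]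
    (W : Submodule ℝ (Ω → ℝ))
    (hW : ∀ G ∈ W, Measurable G ∧ ∃ v : ℝ≥0, P.map G = gaussianReal 0 v)
    (V : ℕ → Ω → ℝ) (hV : ∀ n, V n ∈ W) (hb : ∀ᵐ ω ∂P, ∃ K, ∀ n, |V n ω| ≤ K) :
    ∃ l : ℝ, 0 < l ∧ ∃ C : ℝ, 0 < C ∧
      (∀ u : ℝ, 0 ≤ u →
        P {ω | ∃ n, u < |V n ω|} ≤ ENNReal.ofReal (C * Real.exp (-(l * u ^ 2)))) ∧
      ∃ w : ℝ, ∀ n, ∫ ω, V n ω ^ 2 ∂P ≤ w := by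
  obtain ⟨C, hC0, hC⟩ := fern_const
  obtain ⟨a, ha0, ha⟩ := exists_level P V hb
  have key := fern_fin P W hW C hC V hV a ha
  set l := Fernique.logRatio (3/4) * a⁻¹ ^ 2 with hl
  have hl0 : 0 < l := mul_pos fern_log_pos (by positivity)
  refine ⟨l, hl0, C, hC0, ?_, C / l, ?_⟩
  · intro u hu
    have hset : {ω | ∃ n, u < |V n ω|} = ⋃ N : ℕ, {ω | ∃ n < N, u < |V n ω|} := by
      ext ω
      simp only [mem_ofPred_eq, mem_iUnion]
      exact ⟨fun ⟨n, hn⟩ => ⟨n+1, n, by omega, hn⟩, fun ⟨N, n, _, hn⟩ => ⟨n, hn⟩⟩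
    have hmono : Monotone (fun N : ℕ => {ω | ∃ n < N, u < |V n ω|}) := by
      rintro N M hNM ω ⟨n, hn, h⟩
      exact ⟨n, by omega, h⟩
    rw [hset, hmono.measure_iUnion]
    refine iSup_le fun N => ?_
    have hmk := (key N)
    have hm : Measurable (fun ω => fun i : Fin N => V i ω) :=
      measurable_pi_lambda _ fun i => (hW _ (hV i)).1
    have := mul_meas_ge_le_lintegral₀ (μ := P)
      (f := fun ω => ENNReal.ofReal (Real.exp (l * ‖fun i : Fin N => V i ω‖ ^ 2)))
      (((hm.norm.pow_const 2).const_mul l).exp.ennreal_ofReal).aemeasurable (ENNReal.ofReal (Real.exp (l * u ^ 2)))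
    have h3 : P {ω | ∃ n < N, u < |V n ω|} ≤ P {ω | ENNReal.ofReal (Real.exp (l * u ^ 2)) ≤
        ENNReal.ofReal (Real.exp (l * ‖fun i : Fin N => V i ω‖ ^ 2))} := by
      refine measure_mono ?_
      rintro ω ⟨n, hn, h⟩
      refine ENNReal.ofReal_le_ofReal (Real.exp_le_exp.2 ?_)
      have : |V n ω| ≤ ‖fun i : Fin N => V i ω‖ :=
        norm_le_pi_norm (fun i : Fin N => V i ω) ⟨n, hn⟩
      have : u ≤ ‖fun i : Fin N => V i ω‖ := by linarith
      gcongr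
    have h4 : ENNReal.ofReal (Real.exp (l * u ^ 2)) * P {ω | ∃ n < N, u < |V n ω|}
        ≤ ENNReal.ofReal C := le_trans (by gcongr) (this.trans hmk)
    rw [Real.exp_neg, ← div_eq_mul_inv, ENNReal.ofReal_div_of_pos (Real.exp_pos _)]
    rw [ENNReal.le_div_iff_mul_le (by left; simp [Real.exp_pos]) (by left; simp), mul_comm]
    exact h4
  · intro n
    have hmem := (gauss_sq P (V n) _ (hW _ (hV n)).2.choose_spec).1
    rw [le_div_iff₀ hl0, ← integral_mul_const]
    have hae : AEStronglyMeasurable (fun ω => V n ω ^ 2 * l) P :=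
      (hmem.aestronglyMeasurable.pow 2).mul_const l
    rw [integral_eq_lintegral_of_nonneg_ae
      (Filter.Eventually.of_forall fun ω => by change 0 ≤ V n ω ^ 2 * l; positivity) hae]
    refine ENNReal.toReal_le_of_le_ofReal hC0.le ?_
    refine le_trans (lintegral_mono fun ω => ?_) (key (n+1))
    refine ENNReal.ofReal_le_ofReal ?_
    have : |V n ω| ≤ ‖fun i : Fin (n+1) => V i ω‖ :=
        norm_le_pi_norm (fun i : Fin (n+1) => V i ω) ⟨n, by omega⟩
    have h2 : V n ω ^ 2 ≤ ‖fun i : Fin (n+1) => V i ω‖ ^ 2 := by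
      rw [← sq_abs]; gcongr
    have h3 := Real.add_one_le_exp (l * ‖fun i : Fin (n+1) => V i ω‖ ^ 2)
    nlinarith

lemma lip_one {A B : ℝ} (hAB : A < B) {f : ℝ → ℝ} (hf : ContDiffOn ℝ 1 f (Icc A B)) :
    ∃ K : ℝ, ∀ s ∈ Icc A B, ∀ t ∈ Icc A B, |f s - f t| ≤ K * |s - t| := by
  have hc := hf.continuousOn_derivWithin (uniqueDiffOn_Icc hAB) le_rfl
  obtain ⟨K, hK⟩ := isCompact_Icc.exists_bound_of_continuousOn hc
  refine ⟨K, fun s hs t ht => ?_⟩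
  have := (convex_Icc A B).norm_image_sub_le_of_norm_hasDerivWithin_le
    (f := f) (f' := derivWithin f (Icc A B)) (C := K)
    (fun x hx => (hf.differentiableOn one_ne_zero x hx).hasDerivWithinAt) hK ht hs
  simpa using this

lemma lip_two {A B : ℝ} (hAB : A < B) {f : ℝ → ℝ} (hf : ContDiffOn ℝ 2 f (Icc A B))
    {t₀ : ℝ} (ht₀ : t₀ ∈ Icc A B) (hend : t₀ = A ∨ t₀ = B) :
    ∃ K : ℝ, ∀ s ∈ Ioo A B, ∀ t ∈ Ioo A B,
      |(f s - f t₀) / (s - t₀) - (f t - f t₀) / (t - t₀)| ≤ K * |s - t| := by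
  set g := derivWithin f (Icc A B) with hg
  have hg1 : ContDiffOn ℝ 1 g (Icc A B) := hf.derivWithin (uniqueDiffOn_Icc hAB) (by norm_num)
  obtain ⟨K, hK⟩ := lip_one hAB hg1
  have hd : ∀ x ∈ Icc A B, HasDerivWithinAt f (g x) (Icc A B) x := fun x hx =>
    (hf.differentiableOn two_ne_zero x hx).hasDerivWithinAt
  have hK0 : 0 ≤ K := by
    have := hK A (by simp [hAB.le]) B (by simp [hAB.le])
    by_contra h
    push Not at h
    have h2 : 0 < |A - B| := abs_pos.2 (by linarith)
    nlinarith [abs_nonneg (g A - g B)]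
  refine ⟨K, fun s hs t ht => ?_⟩
  have hne : ∀ x ∈ Ioo A B, x - t₀ ≠ 0 := by
    rintro x ⟨h1, h2⟩
    rcases hend with rfl | rfl <;> intro h <;> linarith
  have hder : ∀ x ∈ Ioo A B, HasDerivWithinAt (fun t => (f t - f t₀) / (t - t₀))
      ((g x * (x - t₀) - (f x - f t₀) * 1) / (x - t₀) ^ 2) (Ioo A B) x := by
    intro x hx
    have h1 := ((hd x (Ioo_subset_Icc_self hx)).mono Ioo_subset_Icc_self).sub_const (f t₀)
    have h2 := (hasDerivWithinAt_id x (Ioo A B)).sub_const t₀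
    exact h1.div h2 (hne x hx)
  have hbd : ∀ x ∈ Ioo A B, ‖(g x * (x - t₀) - (f x - f t₀) * 1) / (x - t₀) ^ 2‖ ≤ K := by
    intro x hx
    have hxI := Ioo_subset_Icc_self hx
    have hsub : uIcc t₀ x ⊆ Icc A B := by
      intro y hy
      have := (ordConnected_Icc (a := A) (b := B)).uIcc_subset ht₀ hxI
      exact this hy
    have hmv := (convex_uIcc t₀ x).norm_image_sub_le_of_norm_hasDerivWithin_le
      (f := fun y => f y - g x * y) (f' := fun y => g y - g x * 1) (C := K * |x - t₀|)
      (fun y hy => ((hd y (hsub hy)).mono hsub).sub ((hasDerivWithinAt_id y _).const_mul (g x)))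
      (fun y hy => by
        have h1 := hK y (hsub hy) x hxI
        have h2 : |y - x| ≤ |x - t₀| := by
          rw [abs_sub_comm]
          exact abs_sub_right_of_mem_uIcc hy
        rw [mul_one, Real.norm_eq_abs]
        exact h1.trans (by gcongr))
      left_mem_uIcc right_mem_uIcc
    simp only [Real.norm_eq_abs] at hmv ⊢
    rw [abs_div, abs_pow, div_le_iff₀ (by have := abs_pos.2 (hne x hx); positivity)]
    have : |g x * (x - t₀) - (f x - f t₀) * 1| = |f x - g x * x - (f t₀ - g x * t₀)| := by
      rw [abs_sub_comm]; congr 1; ring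
    rw [this]
    nlinarith
  have := (convex_Ioo A B).norm_image_sub_le_of_norm_hasDerivWithin_le hder hbd ht hs
  simpa using this

lemma num_tail {Ω : Type*} [MeasurableSpace Ω] (P : Measure Ω) [IsProbabilityMeasure P]
    (W : Submodule ℝ (Ω → ℝ))
    (hW : ∀ G ∈ W, Measurable G ∧ ∃ v : ℝ≥0, P.map G = gaussianReal 0 v)
    (S w : ℝ) (hS : 0 < S) (hw : w < S) :
    ∃ ε : ℝ, 0 < ε ∧ ∃ χ : ℝ, 0 < χ ∧ χ ≤ 1 ∧ 3 * ε < 1 ∧ ∀ G ∈ W, ∫ ω, G ω ^ 2 ∂P ≤ w →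
      ∀ u : ℝ, 0 < u → P {ω | (1 - 3 * ε) * u ≤ G ω} ≤
        ENNReal.ofReal (Real.exp (-(u ^ 2) * (1 + χ) / (2 * S))) := by
  set w' := max w (S / 2) with hw'
  have h1 : w' < S := max_lt hw (by linarith)
  have h2 : S / 2 ≤ w' := le_max_right _ _
  have h3 : w ≤ w' := le_max_left _ _
  set τ := 1 - w' / S with hτ
  have hτ0 : 0 < τ := by rw [hτ, sub_pos, div_lt_one hS]; exact h1
  have hτ1 : τ ≤ 1 / 2 := by
    have : 1 / 2 ≤ w' / S := by rw [le_div_iff₀ hS]; linarith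
    linarith
  have hwS : w' = S * (1 - τ) := by rw [hτ]; field_simp; ring
  refine ⟨τ / 12, by positivity, τ / 2, by positivity, by linarith, by linarith, ?_⟩
  intro G hG hGw u hu
  obtain ⟨v, hv⟩ := (hW G hG).2
  have hv2 := (gauss_sq P G v hv).2
  have := gauss_tail P G v hv w' ((1 - 3 * (τ / 12)) * u) (by linarith) (by
    have : 0 ≤ 1 - 3 * (τ / 12) := by linarith
    positivity)
  refine this.trans (ENNReal.ofReal_le_ofReal (Real.exp_le_exp.2 ?_))
  have hpos : 0 < w' := by linarith
  rw [neg_mul, neg_div, neg_div, neg_le_neg_iff, div_le_div_iff₀ (by positivity) (by positivity), hwS]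
  have hk : (1 + τ / 2) * (1 - τ) ≤ (1 - 3 * (τ / 12)) ^ 2 := by nlinarith [sq_nonneg τ]
  have : (0:ℝ) ≤ 2 * S * u ^ 2 := by positivity
  nlinarith [mul_le_mul_of_nonneg_left hk this]

abbrev RIdx (A B : ℝ) := {q : ℚ // (q : ℝ) ∈ Ioo A B}

lemma ridx_dense {A B : ℝ} (hAB : A < B) {t : ℝ} (ht : t ∈ Icc A B) {p : ℝ → Prop}
    (hp : ∀ᶠ x in nhdsWithin t (Icc A B), p x) : ∃ q : RIdx A B, p (q.1 : ℝ) := by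
  obtain ⟨O, hO, htO, hOp⟩ := mem_nhdsWithin.1 hp
  have hcl : t ∈ closure (Ioo A B) := by rw [closure_Ioo hAB.ne]; exact ht
  have hne : (O ∩ Ioo A B).Nonempty := mem_closure_iff.1 hcl O hO htO
  obtain ⟨q, hq⟩ := Rat.denseRange_cast (𝕜 := ℝ) |>.exists_mem_open (hO.inter isOpen_Ioo) hne
  exact ⟨⟨q, hq.2⟩, hOp ⟨hq.1, Ioo_subset_Icc_self hq.2⟩⟩

lemma ridx_net {A B : ℝ} (hAB : A < B) {ρ : ℝ} (hρ : 0 < ρ) :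
    ∃ T : Finset (RIdx A B), ∀ x ∈ Icc A B, ∃ g ∈ T, |x - (g.1 : ℝ)| < ρ := by
  obtain ⟨T, hT⟩ := isCompact_Icc.elim_finite_subcover (s := Icc A B)
    (fun q : RIdx A B => Metric.ball (q.1 : ℝ) ρ) (fun _ => Metric.isOpen_ball) (by
      intro x hx
      obtain ⟨q, hq⟩ := ridx_dense hAB hx (p := fun y => dist x y < ρ) (by
        have : Filter.Tendsto (fun y => dist x y) (nhds x) (nhds (dist x x)) :=
          (continuous_const.dist continuous_id).continuousAt
        rw [dist_self] at this
        exact (this.eventually (gt_mem_nhds hρ)).filter_mono nhdsWithin_le_nhds)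
      exact mem_iUnion.2 ⟨q, hq⟩)
  refine ⟨T, fun x hx => ?_⟩
  obtain ⟨g, hg, h⟩ := mem_iUnion₂.1 (hT hx)
  exact ⟨g, hg, by simpa [Real.dist_eq] using h⟩

lemma fern_idx {Ω : Type*} [MeasurableSpace Ω] (P : Measure Ω) [IsProbabilityMeasure P]
    (W : Submodule ℝ (Ω → ℝ))
    (hW : ∀ G ∈ W, Measurable G ∧ ∃ v : ℝ≥0, P.map G = gaussianReal 0 v)
    {ι : Type*} [Countable ι] [Nonempty ι]
    (V : ι → Ω → ℝ) (hV : ∀ n, V n ∈ W) (hb : ∀ᵐ ω ∂P, ∃ K, ∀ n, |V n ω| ≤ K)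
    (S : ℝ) (hS : 0 < S) :
    (∃ R₀ : ℝ, ∃ C : ℝ, 0 < C ∧ ∀ R ≥ R₀, ∀ u : ℝ, 0 < u →
        P {ω | ∃ n, R * u < |V n ω|} ≤ ENNReal.ofReal (C * Real.exp (-(u ^ 2) / S))) ∧
      ∃ w : ℝ, ∀ n, ∫ ω, V n ω ^ 2 ∂P ≤ w := by
  obtain ⟨e, he⟩ := exists_surjective_nat ι
  obtain ⟨l, hl, C, hC, h1, w, h2⟩ := fern_seq P W hW (fun n => V (e n)) (fun n => hV _) (by
    filter_upwards [hb] with ω ⟨K, hK⟩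
    exact ⟨K, fun n => hK _⟩)
  refine ⟨⟨max 1 (1 / (l * S)), C, hC, ?_⟩, w, fun n => ?_⟩
  · intro R hR u hu
    have hR1 : 1 ≤ R := (le_max_left _ _).trans hR
    have hR2 : 1 / (l * S) ≤ R := (le_max_right _ _).trans hR
    have hset : {ω | ∃ n, R * u < |V n ω|} = {ω | ∃ n, R * u < |V (e n) ω|} := by
      ext ω
      exact he.exists (p := fun n => R * u < |V n ω|)
    rw [hset]
    refine (h1 (R * u) (by positivity)).trans (ENNReal.ofReal_le_ofReal ?_)
    gcongr
    rw [neg_div, neg_le_neg_iff, div_le_iff₀ hS]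
    rw [div_le_iff₀ (by positivity)] at hR2
    have : R ≤ R ^ 2 := by nlinarith
    have h3 : 1 ≤ R ^ 2 * (l * S) := hR2.trans (by gcongr)
    nlinarith [sq_nonneg u]
  · obtain ⟨m, rfl⟩ := he n
    exact h2 m

lemma var_near {Ω : Type*} [MeasurableSpace Ω] (P : Measure Ω) [IsProbabilityMeasure P]
    (X1 X0 D : Ω → ℝ) (h1 : MemLp X1 2 P) (h0 : MemLp X0 2 P) (hD : MemLp D 2 P)
    (d sg θ κ ρ w S s1 : ℝ) (hsg : sg = 1 ∨ sg = -1) (hd : 0 < sg * d) (hdρ : sg * d ≤ ρ)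
    (hDd : ∀ ω, D ω = (X1 ω - X0 ω) / d)
    (hw : ∫ ω, D ω ^ 2 ∂P ≤ w) (hw0 : 0 < w) (hS : ∫ ω, X0 ω ^ 2 ∂P = S)
    (hs1 : ∫ ω, X1 ω ^ 2 ∂P = s1) (hκ : 0 < κ)
    (hs : s1 ≤ S - 2 * κ * (sg * d)) (hθ : 0 < θ) (hθw : θ * w ≤ κ / 2) (hρw : ρ * w ≤ κ / 2) :
    ∫ ω, (X1 ω + θ * (sg * D ω)) ^ 2 ∂P ≤ S - θ * κ := by
  have hd0 : d ≠ 0 := by rintro rfl; simp at hd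
  have hsg2 : sg * sg = 1 := by rcases hsg with rfl | rfl <;> norm_num
  have hexp : ∀ ω, (X1 ω + θ * (sg * D ω)) ^ 2 =
      (X1 ω ^ 2 + (θ / (sg * d)) * (X1 ω ^ 2 - X0 ω ^ 2)) + (θ * (sg * d) + θ ^ 2) * D ω ^ 2 := by
    intro ω
    have hX0 : X0 ω = X1 ω - d * D ω := by rw [hDd]; field_simp; ring
    rw [hX0]
    have : θ / (sg * d) = θ * sg / d := by
      rw [div_eq_div_iff hd.ne' hd0]
      linear_combination (-θ * d) * hsg2
    rw [this]
    field_simp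
    linear_combination (θ^2 * D ω ^2 * d) * hsg2
  simp_rw [hexp]
  have i1 := h1.integrable_sq
  have i0 := h0.integrable_sq
  have iD := hD.integrable_sq
  have i2 : Integrable (fun ω => X1 ω ^ 2 - X0 ω ^ 2) P := i1.sub i0
  have i3 : Integrable (fun ω => θ / (sg * d) * (X1 ω ^ 2 - X0 ω ^ 2)) P := i2.const_mul _
  have i4 : Integrable (fun ω => X1 ω ^ 2 + θ / (sg * d) * (X1 ω ^ 2 - X0 ω ^ 2)) P := i1.add i3
  rw [integral_add i4 (iD.const_mul _), integral_add i1 i3, integral_const_mul, integral_const_mul,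
    integral_sub i1 i0, hS, hs1]
  have hb1 : θ / (sg * d) * (s1 - S) ≤ - (2 * κ * θ) := by
    rw [div_mul_eq_mul_div, div_le_iff₀ hd]
    nlinarith
  have hb2 : (θ * (sg * d) + θ ^ 2) * ∫ ω, D ω ^ 2 ∂P ≤ (θ * ρ + θ ^ 2) * w := by
    have : 0 ≤ ∫ ω, D ω ^ 2 ∂P := integral_nonneg fun ω => sq_nonneg _
    have hρ : 0 ≤ ρ := by linarith
    gcongr
  have hb3 : s1 ≤ S := by
    have : 0 < 2 * κ * (sg * d) := by positivity
    linarith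
  nlinarith

set_option maxHeartbeats 1000000 in
lemma one_sided {Ω : Type*} [MeasurableSpace Ω] (P : Measure Ω) [IsProbabilityMeasure P]
    (W : Submodule ℝ (Ω → ℝ))
    (hW : ∀ G ∈ W, Measurable G ∧ ∃ v : ℝ≥0, P.map G = gaussianReal 0 v)
    (A B : ℝ) (hAB : A < B) (X : ℝ → Ω → ℝ) (hX : ∀ t ∈ Icc A B, X t ∈ W)
    (hpaths : ∀ᵐ ω ∂P, ContDiffOn ℝ 2 (fun t => X t ω) (Icc A B))
    (s : ℝ → ℝ) (hs : ∀ t ∈ Icc A B, ∫ ω, X t ω ^ 2 ∂P = s t) (hsc : ContinuousOn s (Icc A B))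
    (t₀ : ℝ) (ht₀ : t₀ ∈ Icc A B) (hmax : ∀ t ∈ Icc A B, t ≠ t₀ → s t < s t₀)
    (sg : ℝ) (hsg : sg = 1 ∨ sg = -1) (hsgt : ∀ t ∈ Ioo A B, 0 < sg * (t - t₀))
    (hend : t₀ = A ∨ t₀ = B) (hS : 0 < s t₀)
    (κ ρ₀ : ℝ) (hκ : 0 < κ) (hρ₀ : 0 < ρ₀)
    (hnear : ∀ t ∈ Icc A B, |t - t₀| < ρ₀ → s t ≤ s t₀ - 2 * κ * |t - t₀|) :
    ∃ χ : ℝ, 0 < χ ∧ ∃ C : ℝ, 0 < C ∧ ∀ u : ℝ, 0 < u →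
      P {ω | ∃ t ∈ Icc A B, u ≤ X t ω ∧ X t₀ ω < u} ≤
        ENNReal.ofReal (C * Real.exp (-(u ^ 2) * (1 + χ) / (2 * s t₀))) := by
  have : Nonempty (RIdx A B) := by
    obtain ⟨q, _⟩ := ridx_dense hAB ht₀ (p := fun _ => True) (by simp)
    exact ⟨q⟩
  have hmem2 : ∀ G ∈ W, MemLp G 2 P := fun G hG => by
    obtain ⟨v, hv⟩ := (hW G hG).2
    exact (gauss_sq P G v hv).1
  have hI : ∀ q : RIdx A B, (q.1 : ℝ) ∈ Icc A B := fun q => Ioo_subset_Icc_self q.2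
  have hne : ∀ q : RIdx A B, (q.1 : ℝ) - t₀ ≠ 0 := fun q h => by
    have := hsgt q.1 q.2
    rw [h] at this
    simp at this
  have habs : ∀ q : RIdx A B, |(q.1 : ℝ) - t₀| = sg * (q.1 - t₀) := fun q => by
    have := hsgt q.1 q.2
    rcases hsg with rfl | rfl
    · rw [one_mul] at *; exact abs_of_pos this
    · rw [abs_of_neg (by linarith)]; ring
  -- the three families
  let D : RIdx A B → Ω → ℝ := fun q ω => (X q.1 ω - X t₀ ω) / (q.1 - t₀)
  let L : RIdx A B × RIdx A B → Ω → ℝ := fun p ω => (X p.1.1 ω - X p.2.1 ω) / (p.1.1 - p.2.1)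
  let F : RIdx A B × RIdx A B → Ω → ℝ := fun p ω => (D p.1 ω - D p.2 ω) / (p.1.1 - p.2.1)
  have hdivW : ∀ G ∈ W, ∀ H ∈ W, ∀ c : ℝ, (fun ω => (G ω - H ω) / c) ∈ W := by
    intro G hG H hH c
    have : (fun ω => (G ω - H ω) / c) = c⁻¹ • (G - H) := by
      ext ω; simp [div_eq_inv_mul]
    rw [this]
    exact W.smul_mem _ (W.sub_mem hG hH)
  have hDW : ∀ q, D q ∈ W := fun q => hdivW _ (hX _ (hI q)) _ (hX _ ht₀) _
  have hLW : ∀ p, L p ∈ W := fun p => hdivW _ (hX _ (hI p.1)) _ (hX _ (hI p.2)) _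
  have hFW : ∀ p, F p ∈ W := fun p => hdivW _ (hDW p.1) _ (hDW p.2) _
  have hquot : ∀ (a b K : ℝ), |a| ≤ K * |b| → |a / b| ≤ |K| := by
    intro a b K h
    rw [abs_div]
    refine div_le_of_le_mul₀ (abs_nonneg _) (abs_nonneg _) (h.trans ?_)
    gcongr
    exact le_abs_self K
  have hDb : ∀ᵐ ω ∂P, ∃ K, ∀ q, |D q ω| ≤ K := by
    filter_upwards [hpaths] with ω hω
    obtain ⟨K, hK⟩ := lip_one hAB (hω.of_le (by norm_num))
    exact ⟨|K|, fun q => hquot _ _ K (hK _ (hI q) _ ht₀)⟩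
  have hLb : ∀ᵐ ω ∂P, ∃ K, ∀ p, |L p ω| ≤ K := by
    filter_upwards [hpaths] with ω hω
    obtain ⟨K, hK⟩ := lip_one hAB (hω.of_le (by norm_num))
    exact ⟨|K|, fun p => hquot _ _ K (hK _ (hI p.1) _ (hI p.2))⟩
  have hFb : ∀ᵐ ω ∂P, ∃ K, ∀ p, |F p ω| ≤ K := by
    filter_upwards [hpaths] with ω hω
    obtain ⟨K, hK⟩ := lip_two hAB hω ht₀ hend
    exact ⟨|K|, fun p => hquot _ _ K (hK _ p.1.2 _ p.2.2)⟩
  obtain ⟨_, w0, hw0⟩ := fern_idx P W hW D hDW hDb (s t₀) hS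
  obtain ⟨⟨R1, C1, hC1, hL⟩, _⟩ := fern_idx P W hW L hLW hLb (s t₀) hS
  obtain ⟨⟨R2, C2, hC2, hF⟩, _⟩ := fern_idx P W hW F hFW hFb (s t₀) hS
  set S := s t₀ with hSdef
  obtain ⟨R, hR1, hR2, hR0⟩ : ∃ R : ℝ, R1 ≤ R ∧ R2 ≤ R ∧ 0 < R :=
    ⟨max (max R1 R2) 1, (le_max_left _ _).trans (le_max_left _ _),
      (le_max_right _ _).trans (le_max_left _ _), lt_of_lt_of_le one_pos (le_max_right _ _)⟩
  obtain ⟨w, hw, hwpos⟩ : ∃ w : ℝ, (∀ q, ∫ ω, D q ω ^ 2 ∂P ≤ w) ∧ 0 < w :=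
    ⟨max w0 1, fun q => (hw0 q).trans (le_max_left _ _), lt_of_lt_of_le one_pos (le_max_right _ _)⟩
  -- near parameters
  obtain ⟨θ, hθ0, hθ1, hθw⟩ : ∃ θ : ℝ, 0 < θ ∧ θ ≤ 1 ∧ θ * w ≤ κ / 2 := by
    refine ⟨min 1 (κ / 2 / w), by positivity, min_le_left _ _, ?_⟩
    rw [← le_div_iff₀ hwpos]
    exact min_le_right _ _
  obtain ⟨ε1, hε1, χ1, hχ1, hχ1', hε1', htail1⟩ :=
    num_tail P W hW S (S - θ * κ) hS (by have : 0 < θ * κ := by positivity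
                                         linarith)
  obtain ⟨ρ, hρ0, hρw, hρR, hρρ⟩ : ∃ ρ : ℝ, 0 < ρ ∧ ρ * w ≤ κ / 2 ∧ R * ρ ≤ ε1 ∧ ρ ≤ ρ₀ := by
    refine ⟨min (min (κ / 2 / w) (ε1 / R)) ρ₀, by positivity, ?_, ?_, min_le_right _ _⟩
    · rw [← le_div_iff₀ hwpos]
      exact (min_le_left _ _).trans (min_le_left _ _)
    · rw [mul_comm, ← le_div_iff₀ hR0]
      exact (min_le_left _ _).trans (min_le_right _ _)
  obtain ⟨t1, ht1⟩ : ∃ t1 : RIdx A B, |(t1.1 : ℝ) - t₀| < ρ := by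
    obtain ⟨q, hq⟩ := ridx_dense hAB ht₀ (p := fun y => |y - t₀| < ρ) (by
        have : Filter.Tendsto (fun y => |y - t₀|) (nhds t₀) (nhds |t₀ - t₀|) :=
          Continuous.continuousAt (by fun_prop)
        rw [sub_self, abs_zero] at this
        exact (this.eventually (gt_mem_nhds hρ0)).filter_mono nhdsWithin_le_nhds)
    exact ⟨q, hq⟩
  let G : Ω → ℝ := fun ω => X t1.1 ω + θ * (sg * D t1 ω)
  have hGW : G ∈ W := by
    have : G = X t1.1 + θ • (sg • D t1) := by ext ω; simp [G]
    rw [this]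
    exact W.add_mem (hX _ (hI t1)) (W.smul_mem _ (W.smul_mem _ (hDW t1)))
  have hGvar : ∫ ω, G ω ^ 2 ∂P ≤ S - θ * κ := by
    refine var_near P (X t1.1) (X t₀) (D t1) (hmem2 _ (hX _ (hI t1))) (hmem2 _ (hX _ ht₀))
      (hmem2 _ (hDW t1)) (t1.1 - t₀) sg θ κ ρ w S (s t1.1) hsg (hsgt _ t1.2) ?_ (fun ω => rfl)
      (hw t1) hwpos (hs _ ht₀) (hs _ (hI t1)) hκ ?_ hθ0 hθw hρw
    · rw [← habs]; exact ht1.le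
    · rw [← habs]; exact hnear _ (hI t1) (ht1.trans_le hρρ)
  have hnearP := htail1 G hGW hGvar
  -- far parameters
  obtain ⟨w2, hw2S, hw2⟩ : ∃ w2 < S, ∀ t ∈ Icc A B, ρ / 2 ≤ |t - t₀| → s t ≤ w2 := by
    have hK : IsCompact (Icc A B ∩ {t | ρ / 2 ≤ |t - t₀|}) :=
      isCompact_Icc.inter_right (isClosed_le (by fun_prop) (by fun_prop))
    rcases (Icc A B ∩ {t | ρ / 2 ≤ |t - t₀|}).eq_empty_or_nonempty with he | hn
    · refine ⟨S - 1, by linarith, fun t ht h => ?_⟩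
      exact absurd (show t ∈ (∅ : Set ℝ) from he ▸ ⟨ht, h⟩) (by simp)
    · obtain ⟨m, hm, hmm⟩ := hK.exists_isMaxOn hn (hsc.mono inter_subset_left)
      refine ⟨s m, hmax m hm.1 ?_, fun t ht h => hmm ⟨ht, h⟩⟩
      rintro rfl
      have := hm.2
      simp at this
      linarith
  obtain ⟨ε2, hε2, χ2, hχ2, hχ2', hε2', htail2⟩ := num_tail P W hW S w2 hS hw2S
  obtain ⟨ρ2, hρ20, hρ2R, hρ2ρ⟩ : ∃ ρ2 : ℝ, 0 < ρ2 ∧ R * ρ2 ≤ ε2 ∧ ρ2 ≤ ρ / 2 := by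
    refine ⟨min (ε2 / R) (ρ / 2), by positivity, ?_, min_le_right _ _⟩
    rw [mul_comm, ← le_div_iff₀ hR0]
    exact min_le_left _ _
  obtain ⟨T, hT⟩ := ridx_net hAB hρ20
  classical
  let T' := T.filter (fun g => ρ / 2 ≤ |(g.1 : ℝ) - t₀|)
  have hfarP : ∀ g ∈ T', ∀ u : ℝ, 0 < u → P {ω | (1 - 3 * ε2) * u ≤ X g.1 ω} ≤
      ENNReal.ofReal (Real.exp (-(u ^ 2) * (1 + χ2) / (2 * S))) := by
    intro g hg
    refine htail2 _ (hX _ (hI g)) ?_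
    rw [hs _ (hI g)]
    exact hw2 _ (hI g) (Finset.mem_filter.1 hg).2
  -- main inclusion
  have hincl : ∀ u : ℝ, 0 < u → P {ω | ∃ t ∈ Icc A B, u ≤ X t ω ∧ X t₀ ω < u} ≤
      P ((({ω | ∃ p, R * u < |L p ω|} ∪ {ω | ∃ p, R * u < |F p ω|}) ∪
        {ω | (1 - 3 * ε1) * u ≤ G ω}) ∪ ⋃ g ∈ T', {ω | (1 - 3 * ε2) * u ≤ X g.1 ω}) := by
    intro u hu
    apply measure_mono_ae
    filter_upwards [hpaths] with ω hω
    rintro ⟨t, ht, hut, h0u⟩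
    by_contra hnot
    have hnot1 : ¬ (((((∃ p, R * u < |L p ω|) ∨ (∃ p, R * u < |F p ω|)) ∨
        (1 - 3 * ε1) * u ≤ G ω)) ∨ ∃ g ∈ T', (1 - 3 * ε2) * u ≤ X g.1 ω) := by
      intro h
      apply hnot
      rcases h with ((h | h) | h) | ⟨g, hg, h⟩
      · exact Or.inl (Or.inl (Or.inl h))
      · exact Or.inl (Or.inl (Or.inr h))
      · exact Or.inl (Or.inr h)
      · exact Or.inr (mem_iUnion₂.2 ⟨g, hg, h⟩)
    push Not at hnot1
    obtain ⟨⟨⟨hnL, hnF⟩, hnG⟩, hnT⟩ := hnot1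
    have hLip : ∀ q g : RIdx A B, X q.1 ω - X g.1 ω ≤ R * u * |(q.1:ℝ) - g.1| := by
      intro q g
      have := hnL (q, g)
      simp only [L] at this
      rcases eq_or_ne (q.1 : ℝ) g.1 with h | h
      · rw [h]; simp
      · have h' : 0 < |(q.1:ℝ) - g.1| := abs_pos.2 (sub_ne_zero.2 h)
        rw [abs_div, div_le_iff₀ h'] at this
        exact (le_abs_self _).trans this
    have hLipD : ∀ q g : RIdx A B, |D q ω - D g ω| ≤ R * u * |(q.1:ℝ) - g.1| := by
      intro q g
      have := hnF (q, g)
      simp only [F] at this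
      rcases eq_or_ne (q.1 : ℝ) g.1 with h | h
      · have : q = g := Subtype.ext (by exact_mod_cast h)
        rw [this]; simp
      · have h' : 0 < |(q.1:ℝ) - g.1| := abs_pos.2 (sub_ne_zero.2 h)
        rwa [abs_div, div_le_iff₀ h'] at this
    set ε := min ε1 ε2 with hε
    have hε0 : 0 < ε := lt_min hε1 hε2
    obtain ⟨q, hq1, hq2⟩ : ∃ q : RIdx A B, (1 - ε) * u < X q.1 ω ∧ X t₀ ω < X q.1 ω := by
      have hc : ContinuousWithinAt (fun t => X t ω) (Icc A B) t := hω.continuousOn t ht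
      have e1 : (1 - ε) * u < X t ω := by nlinarith
      have e2 : X t₀ ω < X t ω := by linarith
      exact ridx_dense hAB ht ((hc.eventually (lt_mem_nhds e1)).and (hc.eventually (lt_mem_nhds e2)))
    rcases lt_or_ge |(q.1 : ℝ) - t₀| ρ with hqρ | hqρ
    · have hdist : |(q.1 : ℝ) - t1.1| ≤ ρ := by
        rw [habs] at hqρ ht1
        have a1 := hsgt _ q.2
        have a2 := hsgt _ t1.2
        rw [abs_le]
        rcases hsg with h | h <;> rw [h] at hqρ ht1 a1 a2 <;> constructor <;> linarith
      have hb : R * u * |(q.1 : ℝ) - t1.1| ≤ ε1 * u := by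
        calc R * u * |(q.1 : ℝ) - t1.1| ≤ R * u * ρ := by gcongr
          _ = (R * ρ) * u := by ring
          _ ≤ ε1 * u := by gcongr
      have b1 := (hLip q t1).trans hb
      have b2 := (hLipD q t1).trans hb
      have b3 : 0 < sg * D q ω := by
        have : sg * D q ω = (X q.1 ω - X t₀ ω) / (sg * (q.1 - t₀)) := by
          simp only [D]
          have := hne q
          rcases hsg with h | h <;> rw [h] <;> field_simp
        rw [this]
        exact div_pos (by linarith) (hsgt _ q.2)
      have b4 : - (ε1 * u) ≤ sg * D t1 ω := by
        rw [abs_le] at b2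
        rcases hsg with h | h <;> rw [h] at b3 ⊢ <;> linarith [b2.1, b2.2]
      have b5 : - (ε1 * u) ≤ θ * (sg * D t1 ω) := by
        have : 0 < ε1 * u := by positivity
        nlinarith
      have b6 : ε * u ≤ ε1 * u := by gcongr; exact min_le_left _ _
      simp only [G] at hnG
      linarith
    · obtain ⟨g, hg, hqg⟩ := hT q.1 (hI q)
      have hgT : g ∈ T' := by
        refine Finset.mem_filter.2 ⟨hg, ?_⟩
        have := abs_sub_le (q.1 : ℝ) g.1 t₀
        linarith
      have hb : R * u * |(q.1 : ℝ) - g.1| ≤ ε2 * u := by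
        calc R * u * |(q.1 : ℝ) - g.1| ≤ R * u * ρ2 := by gcongr
          _ = (R * ρ2) * u := by ring
          _ ≤ ε2 * u := by gcongr
      have b1 := (hLip q g).trans hb
      have b6 : ε * u ≤ ε2 * u := by gcongr; exact min_le_right _ _
      have := hnT g hgT
      have : 0 < ε2 * u := by positivity
      linarith
  refine ⟨min χ1 χ2, lt_min hχ1 hχ2, C1 + C2 + 1 + T'.card, by positivity, fun u hu => ?_⟩
  set E := Real.exp (-(u ^ 2) * (1 + min χ1 χ2) / (2 * S)) with hE
  have hmono : ∀ χ, min χ1 χ2 ≤ χ → Real.exp (-(u ^ 2) * (1 + χ) / (2 * S)) ≤ E := by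
    intro χ h
    apply Real.exp_le_exp.2
    have : 0 ≤ u ^ 2 := sq_nonneg u
    exact div_le_div_of_nonneg_right
      (mul_le_mul_of_nonpos_left (by linarith) (by linarith)) (by positivity)
  have hbad : Real.exp (-(u ^ 2) / S) ≤ E := by
    have := hmono 1 ((min_le_left _ _).trans hχ1')
    convert this using 2
    field_simp
    norm_num
  have hE0 : 0 < E := Real.exp_pos _
  have p1 : P {ω | ∃ p, R * u < |L p ω|} ≤ ENNReal.ofReal (C1 * E) :=
    (hL R hR1 u hu).trans (ENNReal.ofReal_le_ofReal (by gcongr))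
  have p2 : P {ω | ∃ p, R * u < |F p ω|} ≤ ENNReal.ofReal (C2 * E) :=
    (hF R hR2 u hu).trans (ENNReal.ofReal_le_ofReal (by gcongr))
  have p3 : P {ω | (1 - 3 * ε1) * u ≤ G ω} ≤ ENNReal.ofReal (1 * E) :=
    (hnearP u hu).trans (ENNReal.ofReal_le_ofReal (by rw [one_mul]; exact hmono _ (min_le_left _ _)))
  have p4 : P (⋃ g ∈ T', {ω | (1 - 3 * ε2) * u ≤ X g.1 ω}) ≤ ENNReal.ofReal (T'.card * E) := by
    refine (measure_biUnion_finset_le T' _).trans ?_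
    refine (Finset.sum_le_sum (fun g hg => (hfarP g hg u hu).trans
      (ENNReal.ofReal_le_ofReal (hmono _ (min_le_right _ _))))).trans ?_
    rw [Finset.sum_const, nsmul_eq_mul, ENNReal.ofReal_mul (by positivity), ENNReal.ofReal_natCast]
  calc _ ≤ _ := hincl u hu
    _ ≤ ENNReal.ofReal (C1 * E) + ENNReal.ofReal (C2 * E) + ENNReal.ofReal (1 * E)
        + ENNReal.ofReal (T'.card * E) := by
      refine (measure_union_le _ _).trans (add_le_add ((measure_union_le _ _).trans
        (add_le_add ((measure_union_le _ _).trans (add_le_add p1 p2)) p3)) p4)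
    _ = _ := by
      rw [← ENNReal.ofReal_add (by positivity) (by positivity),
        ← ENNReal.ofReal_add (by positivity) (by positivity),
        ← ENNReal.ofReal_add (by positivity) (by positivity)]
      congr 1
      ring

lemma deriv_near {A B : ℝ} (hAB : A < B) (s : ℝ → ℝ) (t₀ : ℝ) (ht₀ : t₀ ∈ Icc A B)
    (hmax : ∀ t ∈ Icc A B, s t ≤ s t₀)
    (sg : ℝ) (hsg : sg = 1 ∨ sg = -1) (hsgt : ∀ t ∈ Ioo A B, 0 < sg * (t - t₀))
    (hsgt' : ∀ t ∈ Icc A B, |t - t₀| = sg * (t - t₀))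
    (hder : derivWithin s (Icc A B) t₀ ≠ 0) :
    ∃ κ : ℝ, 0 < κ ∧ ∃ ρ : ℝ, 0 < ρ ∧ ∀ t ∈ Icc A B, |t - t₀| < ρ →
      s t ≤ s t₀ - 2 * κ * |t - t₀| := by
  set f' := derivWithin s (Icc A B) t₀ with hf'
  have hd : HasDerivWithinAt s f' (Icc A B) t₀ :=
    (differentiableWithinAt_of_derivWithin_ne_zero hder).hasDerivWithinAt
  have hf0 : 0 < |f'| := abs_pos.2 hder
  have ho := (hasDerivWithinAt_iff_isLittleO.1 hd).def (c := |f'| / 2) (by positivity)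
  have hsg2 : sg * sg = 1 := by rcases hsg with rfl | rfl <;> norm_num
  have hsgf : sg * f' = -|f'| := by
    obtain ⟨q, hq⟩ := ridx_dense hAB ht₀ ho
    have h1 := hsgt _ q.2
    have h2 := hsgt' _ (Ioo_subset_Icc_self q.2)
    have h3 := hmax _ (Ioo_subset_Icc_self q.2)
    simp only [Real.norm_eq_abs, smul_eq_mul] at hq
    rw [h2, abs_le] at hq
    have h5 : (q.1 - t₀) * f' = (sg * (q.1 - t₀)) * (sg * f') := by
      linear_combination (-(q.1 - t₀) * f') * hsg2
    have h4 : sg * f' = |f'| ∨ sg * f' = -|f'| := by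
      rcases hsg with rfl | rfl <;> rcases abs_choice f' with h | h <;> rw [h] <;> simp
    rcases h4 with h4 | h4
    · rw [h5, h4] at hq
      have := mul_pos h1 hf0
      nlinarith [hq.1]
    · exact h4
  obtain ⟨ρ, hρ, h⟩ := Metric.mem_nhdsWithin_iff.1 ho
  refine ⟨|f'| / 4, by positivity, ρ, hρ, fun t ht htρ => ?_⟩
  have := h ⟨by rwa [Metric.mem_ball, Real.dist_eq], ht⟩
  simp only [mem_setOf_eq, Real.norm_eq_abs, smul_eq_mul] at this
  have h2 := hsgt' t ht
  rw [h2, abs_le] at this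
  have h5 : (t - t₀) * f' = (sg * (t - t₀)) * (sg * f') := by
    linear_combination (-(t - t₀) * f') * hsg2
  rw [h5, hsgf] at this
  rw [h2]
  linarith [this.2]

/-- Let `X` be a centered Gaussian process on `[A,B]` with a.s. twice
continuously differentiable sample paths and twice continuously differentiable covariance.
If the variance `σ²(t) = r t t` attains its maximum `S` at a unique point `t₀ ∈ [A,B]`
which is an endpoint, and `(σ²)′(t₀) ≠ 0`, then there are `χ > 0`, `C > 0`, `u₀ > 0` with
`|ℙ(max_{[A,B]} |X| ≥ u) − 2 ℙ(X(t₀) ≥ u)| ≤ C e^{−u²(1+χ)/(2S)}` for all `u ≥ u₀`. -/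
theorem statement0
    {Ω : Type*} [MeasurableSpace Ω] (P : Measure Ω) [IsProbabilityMeasure P]
    (A B : ℝ) (hAB : A < B)
    (X : ℝ → Ω → ℝ)
    (hjm : Measurable (Function.uncurry X))
    (hGauss : ∀ (n : ℕ) (c : Fin n → ℝ) (t : Fin n → ℝ),
      (∀ i, t i ∈ Set.Icc A B) →
      ∃ v : ℝ≥0, Measure.map (fun ω => ∑ i, c i * X (t i) ω) P = gaussianReal 0 v)
    (hpaths : ∀ᵐ ω ∂P, ContDiffOn ℝ 2 (fun t => X t ω) (Set.Icc A B))
    (r : ℝ → ℝ → ℝ)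
    (hr : ∀ s t, r s t = ∫ ω, X s ω * X t ω ∂P)
    (hrC2 : ContDiffOn ℝ 2 (fun q : ℝ × ℝ => r q.1 q.2) (Set.Icc A B ×ˢ Set.Icc A B))
    (t₀ : ℝ) (ht₀ : t₀ ∈ Set.Icc A B)
    (hmax : ∀ t ∈ Set.Icc A B, r t t ≤ r t₀ t₀)
    (huniq : ∀ t ∈ Set.Icc A B, r t t = r t₀ t₀ → t = t₀)
    (hend : t₀ = A ∨ t₀ = B)
    (hder : derivWithin (fun t => r t t) (Set.Icc A B) t₀ ≠ 0) :
    ∃ χ > (0:ℝ), ∃ C > (0:ℝ), ∃ u₀ > (0:ℝ), ∀ u ≥ u₀,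
      |(P {ω | ∃ t ∈ Set.Icc A B, u ≤ |X t ω|}).toReal
          - 2 * (P {ω | u ≤ X t₀ ω}).toReal|
        ≤ C * Real.exp (-(u ^ 2) * (1 + χ) / (2 * r t₀ t₀)) := by
  let W : Submodule ℝ (Ω → ℝ) := Submodule.span ℝ (X '' Icc A B)
  have hXm : ∀ t, Measurable (X t) := fun t => hjm.comp measurable_prodMk_left
  have hW : ∀ G ∈ W, Measurable G ∧ ∃ v : ℝ≥0, P.map G = gaussianReal 0 v := by
    intro G hG
    obtain ⟨n, c, g, rfl⟩ := Submodule.mem_span_set'.1 hG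
    choose t ht htg using fun i => (g i).2
    have hsum : (∑ i, c i • ((g i : Ω → ℝ))) = fun ω => ∑ i, c i * X (t i) ω := by
      ext ω
      simp [Finset.sum_apply, htg]
    rw [hsum]
    exact ⟨Finset.measurable_sum _ fun i _ => (hXm _).const_mul _, hGauss n c t ht⟩
  have hX : ∀ t ∈ Icc A B, X t ∈ W := fun t ht => Submodule.subset_span ⟨t, ht, rfl⟩
  have hs : ∀ t, ∫ ω, X t ω ^ 2 ∂P = r t t := fun t => by rw [hr]; simp_rw [sq]
  have hsc : ContinuousOn (fun t => r t t) (Icc A B) :=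
    hrC2.continuousOn.comp (f := fun t : ℝ => (t, t)) (by fun_prop) fun t ht => ⟨ht, ht⟩
  have hmax' : ∀ t ∈ Icc A B, t ≠ t₀ → r t t < r t₀ t₀ := fun t ht hne =>
    lt_of_le_of_ne (hmax t ht) fun h => hne (huniq t ht h)
  have hS : 0 < r t₀ t₀ := by
    obtain ⟨t, ht, hne⟩ : ∃ t ∈ Icc A B, t ≠ t₀ := by
      rcases hend with h | h
      · exact ⟨B, ⟨hAB.le, le_rfl⟩, by rw [h]; exact hAB.ne'⟩
      · exact ⟨A, ⟨le_rfl, hAB.le⟩, by rw [h]; exact hAB.ne⟩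
    refine lt_of_le_of_lt ?_ (hmax' t ht hne)
    rw [← hs]
    exact integral_nonneg fun ω => sq_nonneg _
  obtain ⟨sg, hsg, hsgt, hsgt'⟩ : ∃ sg : ℝ, (sg = 1 ∨ sg = -1) ∧
      (∀ t ∈ Ioo A B, 0 < sg * (t - t₀)) ∧ ∀ t ∈ Icc A B, |t - t₀| = sg * (t - t₀) := by
    rcases hend with h | h
    · refine ⟨1, Or.inl rfl, fun t ht => by linarith [ht.1], fun t ht => ?_⟩
      rw [one_mul, abs_of_nonneg (by linarith [ht.1])]
    · refine ⟨-1, Or.inr rfl, fun t ht => by linarith [ht.2], fun t ht => ?_⟩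
      rw [abs_of_nonpos (by linarith [ht.2])]; ring
  obtain ⟨κ, hκ, ρ₀, hρ₀, hnear⟩ :=
    deriv_near hAB (fun t => r t t) t₀ ht₀ hmax sg hsg hsgt hsgt' hder
  obtain ⟨χ1, hχ1, C1, hC1, h1⟩ := one_sided P W hW A B hAB X hX hpaths (fun t => r t t)
    (fun t _ => hs t) hsc t₀ ht₀ hmax' sg hsg hsgt hend hS κ ρ₀ hκ hρ₀ hnear
  obtain ⟨χ2, hχ2, C2, hC2, h2⟩ := one_sided P W hW A B hAB (fun t => -X t)
    (fun t ht => W.neg_mem (hX t ht)) (by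
      filter_upwards [hpaths] with ω hω
      exact hω.neg) (fun t => r t t)
    (fun t _ => by simpa using hs t) hsc t₀ ht₀ hmax' sg hsg hsgt hend hS κ ρ₀ hκ hρ₀ hnear
  refine ⟨min χ1 χ2, lt_min hχ1 hχ2, C1 + C2, by positivity, 1, one_pos, fun u hu1 => ?_⟩
  have hu : 0 < u := lt_of_lt_of_le one_pos hu1
  set S := r t₀ t₀ with hSdef
  set E := Real.exp (-(u ^ 2) * (1 + min χ1 χ2) / (2 * S)) with hE
  have hE0 : 0 < E := Real.exp_pos _
  have hmono : ∀ χ, min χ1 χ2 ≤ χ → Real.exp (-(u ^ 2) * (1 + χ) / (2 * S)) ≤ E := by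
    intro χ h
    apply Real.exp_le_exp.2
    have : 0 ≤ u ^ 2 := sq_nonneg u
    exact div_le_div_of_nonneg_right
      (mul_le_mul_of_nonpos_left (by linarith) (by linarith)) (by positivity)
  have q1 : P.real {ω | ∃ t ∈ Icc A B, u ≤ X t ω ∧ X t₀ ω < u} ≤ C1 * E := by
    refine ENNReal.toReal_le_of_le_ofReal (by positivity) ((h1 u hu).trans
      (ENNReal.ofReal_le_ofReal ?_))
    have := hmono _ (min_le_left χ1 χ2)
    gcongr
  have q2 : P.real {ω | ∃ t ∈ Icc A B, u ≤ -X t ω ∧ -X t₀ ω < u} ≤ C2 * E := by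
    refine ENNReal.toReal_le_of_le_ofReal (by positivity) ((h2 u hu).trans
      (ENNReal.ofReal_le_ofReal ?_))
    have := hmono _ (min_le_right χ1 χ2)
    gcongr
  have hneg : Measurable (fun ω => -X t₀ ω) := (hXm t₀).neg
  have hms : MeasurableSet {ω | u ≤ -X t₀ ω} := measurableSet_le measurable_const hneg
  have hsym : P.real {ω | u ≤ -X t₀ ω} = P.real {ω | u ≤ X t₀ ω} := by
    obtain ⟨v, hv⟩ := (hW _ (hX t₀ ht₀)).2
    have hv' : P.map (fun ω => -X t₀ ω) = gaussianReal 0 v := by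
      have : (fun ω => -X t₀ ω) = (fun x => -x) ∘ X t₀ := rfl
      rw [this, ← Measure.map_map measurable_neg (hXm _), hv, gaussianReal_map_neg, neg_zero]
    have e1 : P {ω | u ≤ X t₀ ω} = gaussianReal 0 v (Ici u) := by
      rw [← hv, Measure.map_apply (hXm _) measurableSet_Ici]; rfl
    have e2 : P {ω | u ≤ -X t₀ ω} = gaussianReal 0 v (Ici u) := by
      rw [← hv', Measure.map_apply hneg measurableSet_Ici]; rfl
    simp only [Measure.real, e1, e2]
  have hunion : P.real ({ω | u ≤ X t₀ ω} ∪ {ω | u ≤ -X t₀ ω}) = 2 * P.real {ω | u ≤ X t₀ ω} := by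
    rw [measureReal_union ?_ hms, hsym]
    · ring
    · rw [Set.disjoint_left]
      intro ω (ha : u ≤ X t₀ ω) (hb : u ≤ -X t₀ ω)
      linarith
  change |P.real _ - 2 * P.real _| ≤ _
  rw [← hunion]
  have hlow : P.real ({ω | u ≤ X t₀ ω} ∪ {ω | u ≤ -X t₀ ω}) ≤
      P.real {ω | ∃ t ∈ Icc A B, u ≤ |X t ω|} := by
    refine measureReal_mono ?_
    rintro ω (h | h)
    · exact ⟨t₀, ht₀, le_trans h (le_abs_self _)⟩
    · exact ⟨t₀, ht₀, le_trans h (neg_le_abs _)⟩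
  have hup : P.real {ω | ∃ t ∈ Icc A B, u ≤ |X t ω|} ≤
      P.real ({ω | u ≤ X t₀ ω} ∪ {ω | u ≤ -X t₀ ω}) +
        (P.real {ω | ∃ t ∈ Icc A B, u ≤ X t ω ∧ X t₀ ω < u} +
          P.real {ω | ∃ t ∈ Icc A B, u ≤ -X t ω ∧ -X t₀ ω < u}) := by
    refine le_trans (measureReal_mono ?_) ((measureReal_union_le _ _).trans
      (add_le_add_right (measureReal_union_le _ _) _))
    rintro ω ⟨t, ht, h⟩
    by_cases ha : u ≤ X t₀ ω
    · exact Or.inl (Or.inl ha)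
    by_cases hb : u ≤ -X t₀ ω
    · exact Or.inl (Or.inr hb)
    right
    rcases le_abs.1 h with h | h
    · exact Or.inl ⟨t, ht, h, not_le.1 ha⟩
    · exact Or.inr ⟨t, ht, h, not_le.1 hb⟩
  rw [abs_le]
  constructor
  · have : 0 < (C1 + C2) * E := by positivity
    linarith
  · linarith
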